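/- D is a *-SH domain with trivial *-class group if and only if D is a *-wf-SH domain, i.e., every nonzero nonunit of D is expressible as a finite product of *-wf-homogeneous elements. -/

import Mathlib

open scoped nonZeroDivisors

/-- A star operation on the nonzero fractional ideals of an integral domain `D`
with quotient field `K`: it fixes nonzero principal fractional ideals, commutes with
multiplication by nonzero principal fractional ideals, is extensive, monotone and
idempotent (on nonzero fractional ideals). -/
structure StarOperation (D K : Type*) [CommRing D] [IsDomain D] [Field K]
    [Algebra D K] [IsFractionRing D K] where
  star : FractionalIdeal D⁰ K → FractionalIdeal D⁰ K
  star_spanSingleton : ∀ x : K, x ≠ 0 →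
    star (FractionalIdeal.spanSingleton D⁰ x) = FractionalIdeal.spanSingleton D⁰ x
  star_smul : ∀ (x : K) (I : FractionalIdeal D⁰ K), x ≠ 0 → I ≠ 0 →
    star (FractionalIdeal.spanSingleton D⁰ x * I) = FractionalIdeal.spanSingleton D⁰ x * star I
  le_star : ∀ I : FractionalIdeal D⁰ K, I ≠ 0 → I ≤ star I
  star_mono : ∀ I J : FractionalIdeal D⁰ K, I ≠ 0 → J ≠ 0 → I ≤ J → star I ≤ star J
  star_idem : ∀ I : FractionalIdeal D⁰ K, I ≠ 0 → star (star I) = star I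

namespace StarOperation

variable {D K : Type*} [CommRing D] [IsDomain D] [Field K] [Algebra D K] [IsFractionRing D K]
variable (s : StarOperation D K)

/-- `*` has finite character: for every nonzero fractional ideal `I`, `I^*` is the union
of `J^*` over the nonzero finitely generated fractional subideals `J` of `I`. -/
def FiniteCharacter : Prop :=
  ∀ I : FractionalIdeal D⁰ K, I ≠ 0 → ∀ x ∈ s.star I,
    ∃ J : FractionalIdeal D⁰ K, J ≠ 0 ∧ (J : Submodule D K).FG ∧ J ≤ I ∧ x ∈ s.star J

/-- A (nonzero) integral ideal `I` of `D` is a `*`-ideal if `I^* = I`. -/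
def IsStarIdeal (I : Ideal D) : Prop :=
  I ≠ ⊥ ∧ s.star (I : FractionalIdeal D⁰ K) = (I : FractionalIdeal D⁰ K)

/-- An integral ideal `I` of `D` is a `*`-ideal of finite type if `I = J^*` for some
nonzero finitely generated ideal `J`. -/
def IsFiniteTypeStarIdeal (I : Ideal D) : Prop :=
  ∃ J : Ideal D, J ≠ ⊥ ∧ J.FG ∧
    s.star (J : FractionalIdeal D⁰ K) = (I : FractionalIdeal D⁰ K)

/-- A maximal `*`-ideal: maximal among proper integral `*`-ideals. -/
def IsMaxStarIdeal (M : Ideal D) : Prop :=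
  M ≠ ⊤ ∧ s.IsStarIdeal M ∧ ∀ J : Ideal D, J ≠ ⊤ → s.IsStarIdeal J → M ≤ J → J = M

/-- `I` is `*`-homogeneous: a proper `*`-ideal of finite type such that `(J + J')^* ≠ D`
for every pair `J`, `J'` of proper `*`-ideals of finite type containing `I`. -/
def IsHomog (I : Ideal D) : Prop :=
  I ≠ ⊤ ∧ s.IsStarIdeal I ∧ s.IsFiniteTypeStarIdeal I ∧
    ∀ J J' : Ideal D, J ≠ ⊤ → J' ≠ ⊤ → s.IsStarIdeal J → s.IsStarIdeal J' →
      s.IsFiniteTypeStarIdeal J → s.IsFiniteTypeStarIdeal J' → I ≤ J → I ≤ J' →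
      s.star ((J + J' : Ideal D) : FractionalIdeal D⁰ K) ≠ 1

/-- The set `M(I) = {x ∈ D : (xD + I)^* ≠ D}` attached to an ideal `I`. -/
def MSet (I : Ideal D) : Set D :=
  {x : D | s.star ((Ideal.span {x} + I : Ideal D) : FractionalIdeal D⁰ K) ≠ 1}

/-- `A` and `B` are `*`-comaximal if `(A + B)^* = D`. -/
def StarComaximal (A B : Ideal D) : Prop :=
  s.star ((A + B : Ideal D) : FractionalIdeal D⁰ K) = 1

/-- An integral ideal `I` is `*`-invertible if `(I · I⁻¹)^* = D`. -/
def StarInvertible (I : Ideal D) : Prop :=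
  s.star ((I : FractionalIdeal D⁰ K) * (I : FractionalIdeal D⁰ K)⁻¹) = 1

/-- `D` is a `*`-SH domain: every principal ideal generated by a nonzero nonunit is a
`*`-product of finitely many `*`-homogeneous ideals. -/
def IsSHDomain : Prop :=
  ∀ x : D, x ≠ 0 → ¬IsUnit x →
    ∃ T : Multiset (Ideal D), (∀ J ∈ T, s.IsHomog J) ∧
      s.star ((T.prod : Ideal D) : FractionalIdeal D⁰ K) =
        ((Ideal.span {x} : Ideal D) : FractionalIdeal D⁰ K)

/-- `D` has finite `*`-character: every nonzero nonunit lies in only finitely many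
maximal `*`-ideals. -/
def FiniteStarCharacter : Prop :=
  ∀ x : D, x ≠ 0 → ¬IsUnit x → {P : Ideal D | s.IsMaxStarIdeal P ∧ x ∈ P}.Finite

end StarOperation

namespace StarOperation

variable {D K : Type*} [CommRing D] [IsDomain D] [Field K] [Algebra D K] [IsFractionRing D K]

/-- `D` has trivial `*`-class group: every `*`-invertible integral `*`-ideal is
principal. -/
def TrivialStarClassGroup (s : StarOperation D K) : Prop :=
  ∀ I : Ideal D, s.IsStarIdeal I → s.StarInvertible I → I.IsPrincipal

/-- A `*`-homogeneous ideal `I` is `*`-wf-homogeneous if, whenever `I` is `*`-invertible,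
every `*`-invertible integral `*`-ideal containing `I` is principal. -/
def IsWfHomog (s : StarOperation D K) (I : Ideal D) : Prop :=
  s.IsHomog I ∧ (s.StarInvertible I →
    ∀ J : Ideal D, s.IsStarIdeal J → s.StarInvertible J → I ≤ J → J.IsPrincipal)

/-- An element `x` of `D` is a `*`-wf-homogeneous element if `xD` is a `*`-wf-homogeneous
ideal. -/
def IsWfHomogElem (s : StarOperation D K) (x : D) : Prop :=
  s.IsWfHomog (Ideal.span {x})

end StarOperation

/-!
If `Q` is `*`-homogeneous, then `M(Q) = {x | (xD + Q)* ≠ D}` is a proper `*`-ideal. A `*`-invertible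
`*`-ideal `I` contains an element `j` with `cI ⊆ jD` for some `c ∉ M(Q)`. If `j` is a product of
`*`-homogeneous elements, collecting those that lie in `M(Q)` into a factor `a` gives
`(cD + aD)* = D`, so `I ⊆ aD`. Hence `I = aJ`, where `J` contains the remaining factor of `j` and
so is not contained in `M(Q)`, that is `(J + Q)* = D`. Taking `Q = y₁D` for `*`-homogeneous
elements `y₁, …, yₙ` with `y₁ ⋯ yₙ ∈ I` gives `y₂ ⋯ yₙ ∈ J`, and by induction on `n` every
`*`-invertible `*`-ideal is principal.
-/

open FractionalIdeal

theorem exists_eq_span_singleton_mul_of_le {R : Type*} [CommSemiring R] {I : Ideal R} {a : R}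
    (h : I ≤ Ideal.span {a}) : ∃ J : Ideal R, I = Ideal.span {a} * J := by
  refine ⟨Submodule.comap (LinearMap.mulLeft R a) I,
    (Ideal.eq_span_singleton_mul _ _).mpr ⟨fun i hi => ?_, fun _ hz => hz⟩⟩
  obtain ⟨z, rfl⟩ := Ideal.mem_span_singleton.mp (h hi)
  exact ⟨z, hi, rfl⟩

theorem exists_multiset_prod_eq_of_associated {M : Type*} [CommMonoid M] {p : M → Prop}
    (hp : ∀ a b, Associated a b → p a → p b) {U : Multiset M} (hU : ∀ y ∈ U, p y) {x : M}
    (hx : ¬IsUnit x) (h : Associated U.prod x) :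
    ∃ T : Multiset M, T ≠ 0 ∧ (∀ y ∈ T, p y) ∧ T.prod = x := by
  obtain ⟨u, rfl⟩ := h
  induction U using Multiset.induction_on with
  | empty => simp at hx
  | cons y U _ =>
    obtain ⟨hy, hU⟩ := Multiset.forall_mem_cons.mp hU
    refine ⟨(y * u) ::ₘ U, Multiset.cons_ne_zero,
      Multiset.forall_mem_cons.mpr ⟨hp y _ ⟨u, rfl⟩ hy, hU⟩, ?_⟩
    rw [Multiset.prod_cons, Multiset.prod_cons, mul_right_comm]

namespace StarOperation

variable {D K : Type*} [CommRing D] [IsDomain D] [Field K] [Algebra D K] [IsFractionRing D K]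
variable {s : StarOperation D K} {I J A B P Q : Ideal D}

section IdealClosure

variable (s)

theorem star_one : s.star 1 = 1 := by
  simpa only [spanSingleton_one] using s.star_spanSingleton 1 one_ne_zero

theorem star_le_one {F : FractionalIdeal D⁰ K} (h0 : F ≠ 0) (h : F ≤ 1) : s.star F ≤ 1 :=
  (s.star_mono F 1 h0 one_ne_zero h).trans_eq s.star_one

theorem star_ne_zero {F : FractionalIdeal D⁰ K} (h : F ≠ 0) : s.star F ≠ 0 :=
  ne_bot_of_le_ne_bot h (s.le_star F h)

theorem star_le_star_of_le_star {F G : FractionalIdeal D⁰ K} (hF : F ≠ 0) (hG : G ≠ 0)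
    (h : F ≤ s.star G) : s.star F ≤ s.star G :=
  (s.star_mono F _ hF (s.star_ne_zero hG) h).trans_eq (s.star_idem G hG)

theorem exists_coeIdeal_eq_star (h : I ≠ ⊥) :
    ∃ J : Ideal D, (J : FractionalIdeal D⁰ K) = s.star (I : FractionalIdeal D⁰ K) :=
  le_one_iff_exists_coeIdeal.mp (s.star_le_one (coeIdeal_ne_zero.mpr h) coeIdeal_le_one)

open Classical in
/-- The star operation on integral ideals, as a closure operator. The value of `s.star` at `0` is
unconstrained, so the zero ideal is declared closed by hand. -/
noncomputable def idealClosure : ClosureOperator (Ideal D) :=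
  .mk₂ (fun I => if h : I = ⊥ then ⊥ else (s.exists_coeIdeal_eq_star h).choose)
    (fun I => by
      split_ifs with h
      · exact h.le
      · rw [← coeIdeal_le_coeIdeal K, (s.exists_coeIdeal_eq_star h).choose_spec]
        exact s.le_star _ (coeIdeal_ne_zero.mpr h))
    (fun I J hIJ => by
      split_ifs at hIJ ⊢ with hI hJ hJ
      · exact bot_le
      · exact bot_le
      · exact absurd (le_bot_iff.mp hIJ) hI
      · rw [← coeIdeal_le_coeIdeal K, (s.exists_coeIdeal_eq_star hJ).choose_spec] at hIJ ⊢
        rw [(s.exists_coeIdeal_eq_star hI).choose_spec]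
        exact s.star_le_star_of_le_star (coeIdeal_ne_zero.mpr hI) (coeIdeal_ne_zero.mpr hJ) hIJ)

theorem coe_idealClosure (h : I ≠ ⊥) :
    (s.idealClosure I : FractionalIdeal D⁰ K) = s.star (I : FractionalIdeal D⁰ K) := by
  simp only [idealClosure, ClosureOperator.mk₂_apply, dif_neg h]
  exact (s.exists_coeIdeal_eq_star h).choose_spec

@[simp]
theorem idealClosure_bot : s.idealClosure (⊥ : Ideal D) = ⊥ := by
  simp [idealClosure]

theorem star_coeIdeal_eq_coeIdeal_iff (h : I ≠ ⊥) :
    s.star (I : FractionalIdeal D⁰ K) = (J : FractionalIdeal D⁰ K) ↔ s.idealClosure I = J := by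
  rw [← s.coe_idealClosure h, coeIdeal_inj]

theorem star_coeIdeal_eq_one_iff (h : I ≠ ⊥) :
    s.star (I : FractionalIdeal D⁰ K) = 1 ↔ s.idealClosure I = ⊤ := by
  rw [← coeIdeal_top, s.star_coeIdeal_eq_coeIdeal_iff h]

theorem isStarIdeal_iff : s.IsStarIdeal I ↔ I ≠ ⊥ ∧ s.idealClosure.IsClosed I :=
  and_congr_right fun h =>
    (s.star_coeIdeal_eq_coeIdeal_iff h).trans s.idealClosure.isClosed_iff.symm

theorem idealClosure_span_singleton_mul (x : D) (I : Ideal D) :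
    s.idealClosure (Ideal.span {x} * I) = Ideal.span {x} * s.idealClosure I := by
  obtain rfl | hI := eq_or_ne I ⊥
  · simp
  obtain rfl | hx := eq_or_ne x 0
  · simp
  have hxI : Ideal.span {x} * I ≠ ⊥ := mul_ne_zero (by simpa using hx) hI
  rw [← s.star_coeIdeal_eq_coeIdeal_iff hxI, coeIdeal_mul, coeIdeal_mul, s.coe_idealClosure hI,
    coeIdeal_span_singleton]
  exact s.star_smul _ _ (by simpa using hx) (coeIdeal_ne_zero.mpr hI)

theorem idealClosure_span_singleton (x : D) :
    s.idealClosure (Ideal.span {x}) = Ideal.span {x} := by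
  simpa using s.idealClosure_span_singleton_mul x ⊤

theorem mul_idealClosure_le (A B : Ideal D) : A * s.idealClosure B ≤ s.idealClosure (A * B) := by
  refine Ideal.mul_le.mpr fun a ha b hb => ?_
  have hab : a * b ∈ s.idealClosure (Ideal.span {a} * B) := by
    rw [idealClosure_span_singleton_mul]
    exact Ideal.mul_mem_mul (Ideal.mem_span_singleton_self a) hb
  exact s.idealClosure.monotone (Ideal.mul_mono_left ((Ideal.span_singleton_le_iff_mem A).mpr ha))
    hab

end IdealClosure

theorem FiniteCharacter.exists_fg_of_mem_idealClosure (hs : s.FiniteCharacter) {x : D}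
    (hx : x ∈ s.idealClosure I) : ∃ J : Ideal D, J.FG ∧ J ≤ I ∧ x ∈ s.idealClosure J := by
  obtain rfl | hI := eq_or_ne I ⊥
  · exact ⟨⊥, Submodule.fg_bot, le_rfl, hx⟩
  have hxI : algebraMap D K x ∈ s.star (I : FractionalIdeal D⁰ K) :=
    s.coe_idealClosure hI ▸ mem_coeIdeal_of_mem _ hx
  obtain ⟨F, hF0, hFfg, hFI, hxF⟩ := hs _ (coeIdeal_ne_zero.mpr hI) _ hxI
  obtain ⟨J, rfl⟩ := le_one_iff_exists_coeIdeal.mp (hFI.trans coeIdeal_le_one)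
  rw [← s.coe_idealClosure (coeIdeal_ne_zero.mp hF0)] at hxF
  obtain ⟨y, hy, hyx⟩ := (mem_coeIdeal _).mp hxF
  exact ⟨J, (coeIdeal_fg D⁰ (IsFractionRing.injective D K) J).mp hFfg,
    (coeIdeal_le_coeIdeal K).mp hFI, IsFractionRing.injective D K hyx ▸ hy⟩

section Comaximal

theorem le_of_mul_le_of_idealClosure_eq_top (hA : s.idealClosure A = ⊤)
    (hJ : s.idealClosure.IsClosed J) (h : I * A ≤ J) : I ≤ J :=
  calc
    I = I * s.idealClosure A := by rw [hA, Ideal.mul_top]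
    _ ≤ s.idealClosure (I * A) := s.mul_idealClosure_le I A
    _ ≤ J := hJ.closure_le_iff.mpr h

theorem idealClosure_sup_mul_eq_top (hA : s.idealClosure (I ⊔ A) = ⊤)
    (hB : s.idealClosure (I ⊔ B) = ⊤) : s.idealClosure (I ⊔ A * B) = ⊤ := by
  have hmul : (I ⊔ A) * (I ⊔ B) ≤ I ⊔ A * B := by
    rw [Ideal.sup_mul, Ideal.mul_sup A I B]
    exact sup_le (le_sup_of_le_left Ideal.mul_le_left) (sup_le_sup_right Ideal.mul_le_right (A * B))
  have hle : I ⊔ A ≤ s.idealClosure (I ⊔ A * B) :=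
    le_of_mul_le_of_idealClosure_eq_top hB (s.idealClosure.isClosed_closure _)
      (hmul.trans (s.idealClosure.le_closure _))
  exact top_le_iff.mp (hA ▸ (s.idealClosure.isClosed_closure _).closure_le_iff.mpr hle)

theorem idealClosure_sup_span_prod_eq_top {T : Multiset D}
    (h : ∀ y ∈ T, s.idealClosure (I ⊔ Ideal.span {y}) = ⊤) :
    s.idealClosure (I ⊔ Ideal.span {T.prod}) = ⊤ := by
  induction T using Multiset.induction_on with
  | empty => simp
  | cons y T ih =>
    obtain ⟨hy, hT⟩ := Multiset.forall_mem_cons.mp h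
    rw [Multiset.prod_cons, ← Ideal.span_singleton_mul_span_singleton]
    exact idealClosure_sup_mul_eq_top hy (ih hT)

end Comaximal

section Homogeneous

theorem IsHomog.ne_bot (h : s.IsHomog Q) : Q ≠ ⊥ := h.2.1.1

theorem IsHomog.isClosed (h : s.IsHomog Q) : s.idealClosure.IsClosed Q :=
  (s.isStarIdeal_iff.mp h.2.1).2

theorem IsHomog.isFiniteTypeStarIdeal_idealClosure_sup (h : s.IsHomog Q) (hA : A.FG) :
    s.IsFiniteTypeStarIdeal (s.idealClosure (A ⊔ Q)) := by
  obtain ⟨G, hG0, hG, hGQ⟩ := h.2.2.1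
  have hAG : A ⊔ G ≠ ⊥ := ne_bot_of_le_ne_bot hG0 le_sup_right
  refine ⟨A ⊔ G, hAG, Submodule.FG.sup hA hG, (s.star_coeIdeal_eq_coeIdeal_iff hAG).mpr ?_⟩
  rw [← (s.star_coeIdeal_eq_coeIdeal_iff hG0).mp hGQ, ClosureOperator.closure_sup_closure_right]

theorem IsHomog.idealClosure_sup_sup_ne_top (h : s.IsHomog Q) (hA : A.FG) (hB : B.FG)
    (hAQ : s.idealClosure (A ⊔ Q) ≠ ⊤) (hBQ : s.idealClosure (B ⊔ Q) ≠ ⊤) :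
    s.idealClosure (A ⊔ B ⊔ Q) ≠ ⊤ := by
  have hQ (C : Ideal D) : Q ≤ s.idealClosure (C ⊔ Q) :=
    le_sup_right.trans (s.idealClosure.le_closure _)
  have hstar (C : Ideal D) : s.IsStarIdeal (s.idealClosure (C ⊔ Q)) :=
    s.isStarIdeal_iff.mpr
      ⟨ne_bot_of_le_ne_bot h.ne_bot (hQ C), s.idealClosure.isClosed_closure _⟩
  have hsum := h.2.2.2 _ _ hAQ hBQ (hstar A) (hstar B)
    (h.isFiniteTypeStarIdeal_idealClosure_sup hA) (h.isFiniteTypeStarIdeal_idealClosure_sup hB)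
    (hQ A) (hQ B)
  rwa [Submodule.add_eq_sup, Ne,
    s.star_coeIdeal_eq_one_iff (ne_bot_of_le_ne_bot h.ne_bot ((hQ A).trans le_sup_left)),
    ClosureOperator.closure_sup_closure, ← sup_sup_distrib_right] at hsum

theorem mem_MSet_iff (hQ : Q ≠ ⊥) {x : D} :
    x ∈ s.MSet Q ↔ s.idealClosure (Ideal.span {x} ⊔ Q) ≠ ⊤ :=
  (s.star_coeIdeal_eq_one_iff (ne_bot_of_le_ne_bot hQ le_sup_right)).not

/-- The set `M(Q)` of a homogeneous ideal `Q`, which homogeneity makes an ideal. For `s` of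
finite character it is the unique maximal `*`-ideal containing `Q`. -/
def IsHomog.maxIdeal (h : s.IsHomog Q) : Ideal D where
  carrier := s.MSet Q
  zero_mem' := by
    rw [mem_MSet_iff h.ne_bot]
    simpa [h.isClosed.closure_eq] using h.1
  add_mem' {x y} hx hy := by
    rw [mem_MSet_iff h.ne_bot] at *
    refine ne_top_of_le_ne_top (h.idealClosure_sup_sup_ne_top (Submodule.fg_span_singleton x)
      (Submodule.fg_span_singleton y) hx hy) (s.idealClosure.monotone (sup_le_sup_right ?_ Q))
    exact (Ideal.span_singleton_le_iff_mem _).mpr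
      (Submodule.add_mem_sup (Ideal.mem_span_singleton_self x) (Ideal.mem_span_singleton_self y))
  smul_mem' c x hx := by
    rw [mem_MSet_iff h.ne_bot] at *
    refine ne_top_of_le_ne_top hx (s.idealClosure.monotone (sup_le_sup_right ?_ Q))
    exact Ideal.span_singleton_le_span_singleton.mpr (dvd_mul_left x c)

theorem IsHomog.mem_maxIdeal (h : s.IsHomog Q) {x : D} :
    x ∈ h.maxIdeal ↔ s.idealClosure (Ideal.span {x} ⊔ Q) ≠ ⊤ :=
  mem_MSet_iff h.ne_bot

theorem IsHomog.le_maxIdeal_of_idealClosure_sup_ne_top (h : s.IsHomog Q)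
    (hA : s.idealClosure (A ⊔ Q) ≠ ⊤) : A ≤ h.maxIdeal := fun _ hx =>
  h.mem_maxIdeal.mpr <| ne_top_of_le_ne_top hA <|
    s.idealClosure.monotone (sup_le_sup_right ((Ideal.span_singleton_le_iff_mem A).mpr hx) Q)

theorem IsHomog.idealClosure_sup_ne_top_of_fg (h : s.IsHomog Q) (hA : A.FG)
    (hAQ : A ≤ h.maxIdeal) : s.idealClosure (A ⊔ Q) ≠ ⊤ := by
  induction A, hA using Submodule.fg_induction with
  | singleton x => exact h.mem_maxIdeal.mp (hAQ (Ideal.mem_span_singleton_self x))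
  | sup A B hA hB ihA ihB =>
    exact h.idealClosure_sup_sup_ne_top hA hB (ihA (le_sup_left.trans hAQ))
      (ihB (le_sup_right.trans hAQ))

theorem IsHomog.isClosed_maxIdeal (h : s.IsHomog Q) (hs : s.FiniteCharacter) :
    s.idealClosure.IsClosed h.maxIdeal := by
  refine ClosureOperator.isClosed_iff_closure_le.mpr fun x hx => ?_
  obtain ⟨A, hA, hAQ, hxA⟩ := hs.exists_fg_of_mem_idealClosure hx
  refine h.le_maxIdeal_of_idealClosure_sup_ne_top ?_ hxA
  rw [ClosureOperator.closure_sup_closure_left]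
  exact h.idealClosure_sup_ne_top_of_fg hA hAQ

theorem IsHomog.le_maxIdeal (h : s.IsHomog Q) : Q ≤ h.maxIdeal :=
  h.le_maxIdeal_of_idealClosure_sup_ne_top (by rw [sup_idem, h.isClosed.closure_eq]; exact h.1)

theorem IsHomog.maxIdeal_ne_top (h : s.IsHomog Q) : h.maxIdeal ≠ ⊤ := by
  rw [Ideal.ne_top_iff_one, h.mem_maxIdeal]
  simp

theorem IsHomog.isStarIdeal_maxIdeal (h : s.IsHomog Q) (hs : s.FiniteCharacter) :
    s.IsStarIdeal h.maxIdeal :=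
  s.isStarIdeal_iff.mpr ⟨ne_bot_of_le_ne_bot h.ne_bot h.le_maxIdeal, h.isClosed_maxIdeal hs⟩

theorem IsHomog.le_maxIdeal_iff (h : s.IsHomog Q) (hs : s.FiniteCharacter) :
    A ≤ h.maxIdeal ↔ s.idealClosure (A ⊔ Q) ≠ ⊤ := by
  refine ⟨fun hA => ne_top_of_le_ne_top h.maxIdeal_ne_top ?_,
    h.le_maxIdeal_of_idealClosure_sup_ne_top⟩
  exact (h.isClosed_maxIdeal hs).closure_le_iff.mpr (sup_le hA h.le_maxIdeal)

theorem IsHomog.maxIdeal_le_maxIdeal (hP : s.IsHomog P) (hQ : s.IsHomog Q)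
    (hs : s.FiniteCharacter) (h : s.idealClosure (P ⊔ Q) ≠ ⊤) : hQ.maxIdeal ≤ hP.maxIdeal := by
  refine (hP.le_maxIdeal_iff hs).mpr ?_
  refine ne_top_of_le_ne_top hQ.maxIdeal_ne_top ((hQ.isClosed_maxIdeal hs).closure_le_iff.mpr ?_)
  exact sup_le le_rfl (hQ.le_maxIdeal_of_idealClosure_sup_ne_top h)

theorem IsHomog.exists_multiset_prod_eq_mul (hQ : s.IsHomog Q) (hs : s.FiniteCharacter)
    {T : Multiset D} (hT : ∀ y ∈ T, s.IsHomog (Ideal.span {y})) :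
    ∃ a b : D, T.prod = a * b ∧ b ∉ hQ.maxIdeal ∧
      ∀ c ∉ hQ.maxIdeal, s.idealClosure (Ideal.span {c} ⊔ Ideal.span {a}) = ⊤ := by
  classical
  refine ⟨_, _, (Multiset.prod_filter_mul_prod_filter_not (· ∈ hQ.maxIdeal)).symm, ?_,
    fun c hc => idealClosure_sup_span_prod_eq_top fun y hy => ?_⟩
  · rw [hQ.mem_maxIdeal, not_not, sup_comm]
    refine idealClosure_sup_span_prod_eq_top fun y hy => ?_
    simpa only [hQ.mem_maxIdeal, not_not, sup_comm] using (Multiset.mem_filter.mp hy).2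
  · obtain ⟨hyT, hyQ⟩ := Multiset.mem_filter.mp hy
    by_contra hcy
    refine hc (IsHomog.maxIdeal_le_maxIdeal hQ (hT y hyT) hs ?_ ((hT y hyT).mem_maxIdeal.mpr hcy))
    rw [sup_comm]
    exact hQ.mem_maxIdeal.mp hyQ

end Homogeneous

section StarInvertible

theorem coeIdeal_mul_inv_ne_zero (hI : I ≠ ⊥) :
    (I : FractionalIdeal D⁰ K) * (I : FractionalIdeal D⁰ K)⁻¹ ≠ 0 :=
  ne_bot_of_le_ne_bot (coeIdeal_ne_zero.mpr hI) (coe_ideal_le_self_mul_inv K I)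

theorem coeIdeal_mul_inv_le_one (I : Ideal D) :
    (I : FractionalIdeal D⁰ K) * (I : FractionalIdeal D⁰ K)⁻¹ ≤ 1 := by
  rw [inv_eq]
  exact mul_one_div_le_one

theorem starInvertible_iff_one_le (hI : I ≠ ⊥) : s.StarInvertible I ↔
    1 ≤ s.star ((I : FractionalIdeal D⁰ K) * (I : FractionalIdeal D⁰ K)⁻¹) :=
  ⟨fun h => h.ge, fun h => le_antisymm
    (s.star_le_one (coeIdeal_mul_inv_ne_zero hI) (coeIdeal_mul_inv_le_one I)) h⟩

theorem StarInvertible.of_mul (hIJ : I * J ≠ ⊥) (h : s.StarInvertible (I * J)) :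
    s.StarInvertible I := by
  have hI : I ≠ ⊥ := left_ne_zero_of_mul hIJ
  have hJ_mul_inv : (J : FractionalIdeal D⁰ K) * ((I * J : Ideal D) : FractionalIdeal D⁰ K)⁻¹ ≤
      (I : FractionalIdeal D⁰ K)⁻¹ := by
    rw [inv_eq (I := (I : FractionalIdeal D⁰ K)), le_div_iff_mul_le (coeIdeal_ne_zero.mpr hI),
      mul_comm, ← mul_assoc, ← coeIdeal_mul]
    exact coeIdeal_mul_inv_le_one (I * J)
  refine (starInvertible_iff_one_le hI).mpr (h.ge.trans ?_)
  refine s.star_mono _ _ (coeIdeal_mul_inv_ne_zero hIJ) (coeIdeal_mul_inv_ne_zero hI) ?_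
  rw [coeIdeal_mul, mul_assoc, ← coeIdeal_mul]
  exact mul_le_mul_right hJ_mul_inv _

theorem starInvertible_of_idealClosure_eq_span {x : D} (hI : I ≠ ⊥)
    (h : s.idealClosure I = Ideal.span {x}) : s.StarInvertible I := by
  have hI0 : (I : FractionalIdeal D⁰ K) ≠ 0 := coeIdeal_ne_zero.mpr hI
  have hIx : I ≤ Ideal.span {x} := h ▸ s.idealClosure.le_closure I
  have hx : algebraMap D K x ≠ 0 := by
    simpa using ne_bot_of_le_ne_bot hI hIx
  have hcancel : spanSingleton D⁰ (algebraMap D K x)⁻¹ * ((Ideal.span {x} : Ideal D) :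
      FractionalIdeal D⁰ K) = 1 := by
    rw [coeIdeal_span_singleton, spanSingleton_mul_spanSingleton, inv_mul_cancel₀ hx,
      spanSingleton_one]
  have hinv : spanSingleton D⁰ (algebraMap D K x)⁻¹ ≤ (I : FractionalIdeal D⁰ K)⁻¹ := by
    rw [inv_eq, le_div_iff_mul_le hI0, ← hcancel]
    exact mul_le_mul_right ((coeIdeal_le_coeIdeal K).mpr hIx) _
  have hmul_ne_zero : spanSingleton D⁰ (algebraMap D K x)⁻¹ * (I : FractionalIdeal D⁰ K) ≠ 0 :=
    (IsUnit.of_mul_eq_one _ hcancel).mul_right_eq_zero.not.mpr hI0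
  rw [starInvertible_iff_one_le hI]
  calc
    1 = spanSingleton D⁰ (algebraMap D K x)⁻¹ * s.star (I : FractionalIdeal D⁰ K) := by
      rw [← s.coe_idealClosure hI, h, hcancel]
    _ = s.star (spanSingleton D⁰ (algebraMap D K x)⁻¹ * (I : FractionalIdeal D⁰ K)) :=
      (s.star_smul _ _ (inv_ne_zero hx) hI0).symm
    _ ≤ s.star ((I : FractionalIdeal D⁰ K) * (I : FractionalIdeal D⁰ K)⁻¹) := by
      refine s.star_mono _ _ hmul_ne_zero (coeIdeal_mul_inv_ne_zero hI) ?_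
      rw [mul_comm]
      exact mul_le_mul_right hinv _

theorem StarInvertible.not_mul_inv_le (hI : s.StarInvertible I) (hI0 : I ≠ ⊥)
    (hP : s.IsStarIdeal P) (hP1 : P ≠ ⊤) :
    ¬(I : FractionalIdeal D⁰ K) * (I : FractionalIdeal D⁰ K)⁻¹ ≤ P := fun hle => by
  have hstar := s.star_mono _ _ (coeIdeal_mul_inv_ne_zero hI0) (coeIdeal_ne_zero.mpr hP.1) hle
  rw [show s.star _ = 1 from hI, hP.2, ← coeIdeal_top, coeIdeal_le_coeIdeal] at hstar
  exact hP1 (top_le_iff.mp hstar)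

-- For prime `P` this says that `I` is principal in the localization at `P`.
theorem StarInvertible.exists_dvd_mul (hI : s.StarInvertible I) (hI0 : I ≠ ⊥)
    (hP : s.IsStarIdeal P) (hP1 : P ≠ ⊤) : ∃ j ∈ I, ∃ c ∉ P, ∀ i ∈ I, j ∣ c * i := by
  by_contra! hndvd
  refine hI.not_mul_inv_le hI0 hP hP1 (FractionalIdeal.mul_le.mpr fun v hv u hu => ?_)
  have hIu := (mem_inv_iff (coeIdeal_ne_zero.mpr hI0)).mp hu
  obtain ⟨j, hj, rfl⟩ := (mem_coeIdeal _).mp hv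
  obtain ⟨c, hc⟩ := (mem_one_iff D⁰).mp (hIu _ hv)
  rw [mul_comm, ← hc]
  refine mem_coeIdeal_of_mem _ (by_contra fun hcP => ?_)
  obtain ⟨i, hi, hji⟩ := hndvd j hj c hcP
  obtain ⟨d, hd⟩ := (mem_one_iff D⁰).mp (hIu _ (mem_coeIdeal_of_mem D⁰ hi))
  refine hji ⟨d, IsFractionRing.injective D K ?_⟩
  rw [map_mul, map_mul, hc, hd]
  ring

theorem StarInvertible.of_span_singleton_mul {a : D} (h0 : Ideal.span {a} * J ≠ ⊥)
    (h : s.StarInvertible (Ideal.span {a} * J)) : s.StarInvertible J := by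
  rw [mul_comm] at h0 h
  exact h.of_mul h0

theorem IsStarIdeal.of_span_singleton_mul {a : D} (h : s.IsStarIdeal (Ideal.span {a} * J)) :
    s.IsStarIdeal J := by
  obtain ⟨h0, hclosed⟩ := s.isStarIdeal_iff.mp h
  have ha : a ≠ 0 := by simpa using left_ne_zero_of_mul h0
  refine s.isStarIdeal_iff.mpr ⟨right_ne_zero_of_mul h0, s.idealClosure.isClosed_iff.mpr ?_⟩
  exact (Ideal.span_singleton_mul_right_inj ha).mp
    ((s.idealClosure_span_singleton_mul a J).symm.trans hclosed.closure_eq)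

end StarInvertible

section Factorization

variable (s) in
/-- Every nonzero element is a product of `*`-homogeneous elements: the analogue for elements of
`IsSHDomain`. Products are taken up to associates, so that units (empty products) are included. -/
def HasHomogFactors : Prop :=
  ∀ x : D, x ≠ 0 →
    ∃ T : Multiset D, (∀ y ∈ T, s.IsHomog (Ideal.span {y})) ∧ Associated T.prod x

theorem StarInvertible.exists_eq_span_singleton_mul (hs : s.FiniteCharacter)
    (hD : s.HasHomogFactors) (hQ : s.IsHomog Q) (hI : s.StarInvertible I)
    (hIstar : s.IsStarIdeal I) :
    ∃ (a : D) (J : Ideal D), I = Ideal.span {a} * J ∧ ¬J ≤ hQ.maxIdeal := by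
  obtain ⟨j, hj, c, hc, hdvd⟩ :=
    hI.exists_dvd_mul hIstar.1 (hQ.isStarIdeal_maxIdeal hs) hQ.maxIdeal_ne_top
  have hj0 : j ≠ 0 := by
    rintro rfl
    obtain ⟨i, hi, hi0⟩ := Submodule.exists_mem_ne_zero_of_ne_bot hIstar.1
    obtain rfl := (mul_eq_zero.mp (zero_dvd_iff.mp (hdvd i hi))).resolve_right hi0
    exact hc (zero_mem _)
  obtain ⟨T, hT, hTj⟩ := hD j hj0
  obtain ⟨a, b, hab, hb, hca⟩ := hQ.exists_multiset_prod_eq_mul hs hT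
  have haj : a ∣ j := (Dvd.intro b hab.symm).trans hTj.dvd
  have hIa : I ≤ Ideal.span {a} := by
    refine le_of_mul_le_of_idealClosure_eq_top (hca c hc)
      (s.idealClosure.isClosed_iff.mpr (s.idealClosure_span_singleton a)) ?_
    rw [Ideal.mul_sup, mul_comm I]
    refine sup_le ?_ Ideal.mul_le_right
    exact Ideal.span_singleton_mul_le_iff.mpr fun i hi =>
      Ideal.mem_span_singleton.mpr (haj.trans (hdvd i hi))
  obtain ⟨J, rfl⟩ := exists_eq_span_singleton_mul_of_le hIa
  have habI : a * b ∈ Ideal.span {a} * J := hab ▸ Ideal.mem_of_dvd _ hTj.symm.dvd hj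
  obtain ⟨z, hz, hzb⟩ := Ideal.mem_span_singleton_mul.mp habI
  have ha0 : a ≠ 0 := ne_zero_of_dvd_ne_zero hj0 haj
  obtain rfl := mul_left_cancel₀ ha0 hzb
  exact ⟨a, J, rfl, fun hJ => hb (hJ hz)⟩

theorem StarInvertible.isPrincipal_of_prod_mem (hs : s.FiniteCharacter) (hD : s.HasHomogFactors)
    {T : Multiset D} (hT : ∀ y ∈ T, s.IsHomog (Ideal.span {y})) (hTI : T.prod ∈ I)
    (hI : s.StarInvertible I) (hIstar : s.IsStarIdeal I) : I.IsPrincipal := by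
  induction T using Multiset.induction_on generalizing I with
  | empty =>
    rw [(Ideal.eq_top_iff_one I).mpr hTI]
    exact top_isPrincipal
  | cons y T ih =>
    obtain ⟨hy, hT⟩ := Multiset.forall_mem_cons.mp hT
    obtain ⟨a, J, rfl, hJy⟩ := hI.exists_eq_span_singleton_mul hs hD hy hIstar
    have hJstar := hIstar.of_span_singleton_mul
    have hJtop : s.idealClosure (J ⊔ Ideal.span {y}) = ⊤ := by
      simpa only [hy.le_maxIdeal_iff hs, not_not] using hJy
    have hTJ : Ideal.span {T.prod} ≤ J := by
      refine le_of_mul_le_of_idealClosure_eq_top hJtop (s.isStarIdeal_iff.mp hJstar).2 ?_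
      rw [Ideal.mul_sup, Ideal.span_singleton_mul_span_singleton]
      refine sup_le Ideal.mul_le_right ((Ideal.span_singleton_le_iff_mem J).mpr ?_)
      rw [mul_comm, ← Multiset.prod_cons]
      exact Ideal.mul_le_right hTI
    obtain ⟨d, hd⟩ := ih hT ((Ideal.span_singleton_le_iff_mem J).mp hTJ)
      (hI.of_span_singleton_mul hIstar.1) hJstar
    exact ⟨a * d, by rw [hd, Ideal.submodule_span_eq, Ideal.span_singleton_mul_span_singleton]⟩

theorem HasHomogFactors.trivialStarClassGroup (hD : s.HasHomogFactors) (hs : s.FiniteCharacter) :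
    s.TrivialStarClassGroup := fun I hIstar hI => by
  obtain ⟨x, hxI, hx⟩ := Submodule.exists_mem_ne_zero_of_ne_bot hIstar.1
  obtain ⟨T, hT, hTx⟩ := hD x hx
  exact hI.isPrincipal_of_prod_mem hs hD hT (Ideal.mem_of_dvd I hTx.symm.dvd hxI) hIstar

theorem HasHomogFactors.isSHDomain (hD : s.HasHomogFactors) : s.IsSHDomain := fun x hx _ => by
  obtain ⟨T, hT, hTx⟩ := hD x hx
  refine ⟨T.map fun y => Ideal.span {y}, Multiset.forall_mem_map_iff.mpr hT, ?_⟩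
  rw [Ideal.multiset_prod_span_singleton, Ideal.span_singleton_eq_span_singleton.mpr hTx,
    s.star_coeIdeal_eq_coeIdeal_iff (by simpa using hx), idealClosure_span_singleton]

theorem IsSHDomain.hasHomogFactors (hSH : s.IsSHDomain) (hcl : s.TrivialStarClassGroup) :
    s.HasHomogFactors := fun x hx => by
  by_cases hxu : IsUnit x
  · exact ⟨0, by simp, (associated_one_iff_isUnit.mpr hxu).symm⟩
  obtain ⟨T, hT, hTx⟩ := hSH x hx hxu
  have hT0 : T.prod ≠ ⊥ := Multiset.prod_ne_zero fun h => (hT _ h).ne_bot rfl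
  rw [s.star_coeIdeal_eq_coeIdeal_iff hT0] at hTx
  have hTinv : s.StarInvertible T.prod := starInvertible_of_idealClosure_eq_span hT0 hTx
  have hTprin (J : Ideal D) (hJ : J ∈ T) : ∃ y : D, Ideal.span {y} = J := by
    obtain ⟨U, rfl⟩ := Multiset.exists_cons_of_mem hJ
    rw [Multiset.prod_cons] at hT0 hTinv
    obtain ⟨y, hy⟩ := hcl J (hT J hJ).2.1 (hTinv.of_mul hT0)
    exact ⟨y, hy.symm⟩
  have : CanLift (Ideal D) D (fun y => Ideal.span {y}) (fun J => ∃ y : D, Ideal.span {y} = J) :=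
    ⟨fun _ h => h⟩
  lift T to Multiset D using hTprin
  refine ⟨T, Multiset.forall_mem_map_iff.mp hT, Ideal.span_singleton_eq_span_singleton.mp ?_⟩
  rw [← hTx, Ideal.multiset_prod_span_singleton, idealClosure_span_singleton]

theorem isSHDomain_and_trivialStarClassGroup_iff (hs : s.FiniteCharacter) :
    s.IsSHDomain ∧ s.TrivialStarClassGroup ↔ s.HasHomogFactors :=
  ⟨fun h => h.1.hasHomogFactors h.2, fun hD => ⟨hD.isSHDomain, hD.trivialStarClassGroup hs⟩⟩

theorem IsWfHomogElem.of_associated {x y : D} (h : s.IsWfHomogElem x) (hxy : Associated x y) :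
    s.IsWfHomogElem y := by
  rw [IsWfHomogElem, ← Ideal.span_singleton_eq_span_singleton.mpr hxy]
  exact h

end Factorization

end StarOperation

/-- `D` is a `*`-SH domain with trivial `*`-class group iff `D` is a
`*`-wf-SH domain, i.e. every nonzero nonunit of `D` is a finite product of
`*`-wf-homogeneous elements. -/
theorem SH_trivialClassGroup_iff_wfSH {D K : Type*} [CommRing D] [IsDomain D] [Field K]
    [Algebra D K] [IsFractionRing D K] (s : StarOperation D K) (hs : s.FiniteCharacter) :
    (s.IsSHDomain ∧ s.TrivialStarClassGroup) ↔
    (∀ x : D, x ≠ 0 → ¬IsUnit x →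
      ∃ T : Multiset D, T ≠ 0 ∧ (∀ y ∈ T, s.IsWfHomogElem y) ∧ T.prod = x) := by
  rw [StarOperation.isSHDomain_and_trivialStarClassGroup_iff hs]
  constructor
  · intro hD x hx hxu
    obtain ⟨U, hU, hUx⟩ := hD x hx
    have hUwf : ∀ y ∈ U, s.IsWfHomogElem y := fun y hy =>
      ⟨hU y hy, fun _ J hJ hJinv _ => hD.trivialStarClassGroup hs J hJ hJinv⟩
    exact exists_multiset_prod_eq_of_associated (fun _ _ hab ha => ha.of_associated hab) hUwf hxu
      hUx
  · intro hwf x hx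
    by_cases hxu : IsUnit x
    · exact ⟨0, by simp, (associated_one_iff_isUnit.mpr hxu).symm⟩
    · obtain ⟨T, -, hT, rfl⟩ := hwf x hx hxu
      exact ⟨T, fun y hy => (hT y hy).1, .rfl⟩
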